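/- Assume ℓ(C) = 2 with f_1 = x and f_2 = y (so e_1 = e_2 = 1 and e_j ≥ 2 for j ≥ 3). Then the S-module D₀(f) is generated by the set G = {ρ_1, ..., ρ_{m−1}, σ^z}, and G is a minimal generating set: no element of G lies in the S-submodule of S³ generated by the other m−1 elements of G. In particular C is an m-syzygy curve with exponents d_1 = ⋯ = d_{m−1} = d−2 and d_m = d−1. -/

import Mathlib

open MvPolynomial

noncomputable abbrev S : Type := MvPolynomial (Fin 3) ℂ

/-- The gradient `∇g = (g_x, g_y, g_z)` of a polynomial `g ∈ S = ℂ[x,y,z]`. -/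
noncomputable def grad (g : S) : Fin 3 → S := fun t => pderiv t g

/-- The syzygy triple `ρ_j = Σ_{i≠j} (∏_{k≠i,j} f_k) (∇f_i × ∇f_j)`
of the 2-form `ω_j = df ∧ df_j/f_j`. -/
noncomputable def rho {m : ℕ} (F : Fin m → S) (j : Fin m) : Fin 3 → S :=
  ∑ i ∈ Finset.univ.erase j,
    (∏ k ∈ (Finset.univ.erase j).erase i, F k) • crossProduct (grad (F i)) (grad (F j))

/-- The Jacobian syzygy module `D₀(f) = {(a,b,c) ∈ S³ : a f_x + b f_y + c f_z = 0}`. -/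
noncomputable def D0 (f : S) : Submodule S (Fin 3 → S) where
  carrier := {v | ∑ t, v t * pderiv t f = 0}
  add_mem' {a b} ha hb := by
    simp only [Set.mem_setOf_eq, Pi.add_apply, add_mul, Finset.sum_add_distrib] at *
    rw [ha, hb, add_zero]
  zero_mem' := by simp
  smul_mem' c v hv := by
    simp only [Set.mem_setOf_eq, Pi.smul_apply, smul_eq_mul, mul_assoc, ← Finset.mul_sum] at *
    rw [hv, mul_zero]

/-- The syzygy triple `σ^x = (0, f_z, −f_y)` of the 2-form `df ∧ dx`. -/
noncomputable def sigx (f : S) : Fin 3 → S := ![0, pderiv 2 f, -pderiv 1 f]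
/-- The syzygy triple `σ^y = (−f_z, 0, f_x)` of the 2-form `df ∧ dy`. -/
noncomputable def sigy (f : S) : Fin 3 → S := ![-pderiv 2 f, 0, pderiv 0 f]
/-- The syzygy triple `σ^z = (f_y, −f_x, 0)` of the 2-form `df ∧ dz`. -/
noncomputable def sigz (f : S) : Fin 3 → S := ![pderiv 1 f, -pderiv 0 f, 0]

/-- The candidate generating set `G = {ρ_1, …, ρ_{m−1}, σ^z}` (case `ℓ(C) = 2`). -/
noncomputable def G2 {m : ℕ} (F : Fin m → S) : (Fin (m - 1) ⊕ Fin 1) → (Fin 3 → S) :=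
  Sum.elim (fun j => rho F (Fin.castLE (Nat.sub_le m 1) j)) ![sigz (∏ i, F i)]



/-- Nullstellensatz, at the origin. -/
lemma X_pow_mem_of_zeros (s : Set S)
    (h : ∀ p : Fin 3 → ℂ, (∀ g ∈ s, eval p g = 0) → p = 0) :
    ∃ N : ℕ, ∀ t : Fin 3, (X t : S) ^ N ∈ Ideal.span s := by
  have key : ∀ t : Fin 3, (X t : S) ∈ (Ideal.span s).radical := by
    intro t
    rw [← MvPolynomial.vanishingIdeal_zeroLocus_eq_radical (K := ℂ), mem_vanishingIdeal_iff]
    intro p hp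
    rw [zeroLocus_span] at hp
    have : p = 0 := h p (fun g hg => by simpa [aeval_eq_eval] using hp g hg)
    simp [this]
  choose n hn using fun t => Ideal.mem_radical_iff.1 (key t)
  refine ⟨n 0 + n 1 + n 2, fun t => Ideal.mem_of_dvd _ (pow_dvd_pow _ ?_) (hn t)⟩
  fin_cases t <;> simp <;> omega

lemma homog_scale {a : S} {n : ℕ} (ha : a.IsHomogeneous n) :
    aeval (fun i : Fin 3 => Polynomial.C (X i : S) * Polynomial.X) a
      = Polynomial.C a * (Polynomial.X : Polynomial S) ^ n := by
  rw [aeval_def, eval₂_eq']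
  conv_rhs => rw [a.as_sum, map_sum, Finset.sum_mul]
  refine Finset.sum_congr rfl fun d hd => ?_
  have hdeg : ∑ i, d i = n := by
    have := ha (mem_support_iff.1 hd)
    rw [Finsupp.weight_apply, Finsupp.sum_fintype _ _ (by simp)] at this
    simpa using this
  rw [monomial_eq, Finsupp.prod_fintype _ _ (by simp)]
  simp only [mul_pow, Finset.prod_mul_distrib, Finset.prod_pow_eq_pow_sum, hdeg, map_mul, map_prod, map_pow]
  rw [mul_assoc]; rfl

/-- A divisor of a nonzero homogeneous polynomial is a unit or vanishes at the origin. -/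
lemma dvd_homog {a g : S} {n : ℕ} (ha : a.IsHomogeneous n) (ha0 : a ≠ 0) (hg : g ∣ a) :
    IsUnit g ∨ eval 0 g = 0 := by
  by_contra! hcon
  obtain ⟨hu, hg0⟩ := hcon
  obtain ⟨h, rfl⟩ := hg
  set φ : S →ₐ[ℂ] Polynomial S :=
    aeval (fun i : Fin 3 => Polynomial.C (X i : S) * Polynomial.X) with hφ
  have h1 := homog_scale ha
  rw [← hφ, map_mul] at h1
  have e0 : ∀ q : S, Polynomial.eval 0 (φ q) = C (eval 0 q) := by
    intro q
    induction q using MvPolynomial.induction_on with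
    | C c => simp [hφ, MvPolynomial.algebraMap_eq, Polynomial.algebraMap_apply]
    | add p q hp hq => simp [hp, hq]
    | mul_X p i hp => simp [hφ]
  have e1 : ∀ q : S, Polynomial.eval 1 (φ q) = q := by
    intro q
    induction q using MvPolynomial.induction_on with
    | C c => simp [hφ, MvPolynomial.algebraMap_eq, Polynomial.algebraMap_apply]
    | add p q hp hq => simp [hp, hq]
    | mul_X p i hp => rw [map_mul, Polynomial.eval_mul, hp]; simp [hφ]
  have hX : ¬ (Polynomial.X ∣ φ g) := by
    rw [Polynomial.X_dvd_iff, Polynomial.coeff_zero_eq_eval_zero, e0]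
    simpa using hg0
  have hd : Polynomial.X ^ n ∣ φ h :=
    Polynomial.prime_X.pow_dvd_of_dvd_mul_left n hX ⟨_, h1.trans (mul_comm _ _)⟩
  obtain ⟨r, hr⟩ := hd
  have h2 : φ g * r = Polynomial.C (g * h) := by
    have : (Polynomial.X : Polynomial S) ^ n ≠ 0 := pow_ne_zero _ Polynomial.X_ne_zero
    apply mul_right_cancel₀ this
    rw [← h1, hr]; ring
  have h3 : (φ g).natDegree = 0 := by
    have hne : φ g * r ≠ 0 := by rw [h2]; simpa using ha0
    have := congrArg Polynomial.natDegree h2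
    rw [Polynomial.natDegree_mul (left_ne_zero_of_mul hne) (right_ne_zero_of_mul hne),
      Polynomial.natDegree_C] at this
    omega
  rw [Polynomial.natDegree_eq_zero] at h3
  obtain ⟨s, hs⟩ := h3
  have a0 := e0 g
  have a1 := e1 g
  rw [← hs, Polynomial.eval_C] at a0 a1
  apply hu
  rw [← a1, a0]
  exact (IsUnit.mk0 _ hg0).map C

/-- Two polynomials vanishing at the origin have another common zero. -/
lemma exists_common_zero (u c : S) (hu : eval 0 u = 0) (hc : eval 0 c = 0) :
    ∃ p : Fin 3 → ℂ, p ≠ 0 ∧ eval p u = 0 ∧ eval p c = 0 := by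
  by_contra! hcon
  obtain ⟨N, hN⟩ := X_pow_mem_of_zeros {u, c} (by
    intro p hp
    by_contra hp0
    exact hcon p hp0 (hp u (by simp)) (hp c (by simp)))
  let φ : ℕ → S →ₐ[ℂ] S := fun k => aeval (fun i : Fin 3 => if (i : ℕ) < k then 0 else X i)
  let P : ℕ → Ideal S := fun k => RingHom.ker (φ k)
  have hprime : ∀ k, (P k).IsPrime := fun k => RingHom.ker_isPrime _
  have hcomp : ∀ k, ∀ q, φ (k+1) (φ k q) = φ (k+1) q := by
    intro k q
    have : (φ (k+1)).comp (φ k) = φ (k+1) := by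
      ext i
      simp only [φ, AlgHom.comp_apply, aeval_X]
      by_cases h : (i : ℕ) < k
      · rw [if_pos h, map_zero, if_pos (by omega)]
      · rw [if_neg h, aeval_X]
    exact DFunLike.congr_fun this q
  have hlt : ∀ k : ℕ, k < 3 → P k < P (k+1) := by
    intro k hk
    refine lt_of_le_of_ne ?_ ?_
    · intro q hq
      have hq' : φ k q = 0 := hq
      show φ (k+1) q = 0
      rw [← hcomp, hq', map_zero]
    · intro heq
      have : (X ⟨k, hk⟩ : S) ∈ P (k+1) := by
        show φ (k+1) _ = 0
        simp [φ]
      rw [← heq] at this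
      have h2 : φ k (X ⟨k, hk⟩) = 0 := this
      simp [φ] at h2
  have hh : ∀ k : ℕ, k ≤ 3 → (k : ℕ∞) ≤ (P k).height := by
    intro k
    induction k with
    | zero => simp
    | succ k ih =>
      intro hk
      have := hprime k
      have := hprime (k+1)
      have h1 := Ideal.height_add_one_le_of_lt_of_isPrime (hlt k (by omega))
      push_cast
      exact le_trans (add_le_add_left (ih (by omega)) 1) h1
  have hP3 : ∀ q, φ 3 q = C (eval 0 q) := by
    intro q
    induction q using MvPolynomial.induction_on with
    | C c => simp [φ, MvPolynomial.algebraMap_eq]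
    | add p q hp hq => simp [hp, hq]
    | mul_X p i hp => simp [φ]
  have hmin : P 3 ∈ (Ideal.span {u, c}).minimalPrimes := by
    refine ⟨⟨hprime 3, ?_⟩, ?_⟩
    · rw [Ideal.span_le]
      rintro q (rfl | rfl)
      · show φ 3 _ = 0
        rw [hP3, hu, C_0]
      · show φ 3 _ = 0
        rw [hP3, hc, C_0]
    · rintro Q ⟨hQ, hle⟩ -
      have hX : ∀ t, (X t : S) ∈ Q := fun t => hQ.mem_of_pow_mem N (hle (hN t))
      intro q hq
      have hq0 : φ 3 q = 0 := hq
      have : ∀ q : S, q - φ 3 q ∈ Q := by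
        intro q
        induction q using MvPolynomial.induction_on with
        | C c => simp [φ, MvPolynomial.algebraMap_eq]
        | add p q hp hq =>
          have := Q.add_mem hp hq
          rw [map_add]; convert this using 1; ring
        | mul_X p i hp =>
          have : φ 3 (X i) = 0 := by simp [φ]
          rw [map_mul, this, mul_zero, sub_zero]
          exact Q.mul_mem_left _ (hX i)
      simpa [hq0] using this q
  have h1 := Ideal.height_le_card_of_mem_minimalPrimes_span (Set.toFinite _) hmin
  have h2 := (hh 3 le_rfl).trans h1
  have h3 : ({u, c} : Set S).ncard ≤ 2 := (Set.ncard_insert_le u {c}).trans (by simp)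
  norm_cast at h2
  omega
lemma relprime_syz {a b p q : S} (h : IsRelPrime a b) (ha : a ≠ 0) (hs : p * a + q * b = 0) :
    ∃ k, p = k * b ∧ q = -k * a := by
  have h1 : a ∣ q * b := ⟨-p, by linear_combination hs⟩
  obtain ⟨c, rfl⟩ := h.dvd_of_dvd_mul_right h1
  refine ⟨-c, ?_, by ring⟩
  apply mul_right_cancel₀ ha
  linear_combination hs

lemma koszul3 {a0 a1 a2 k0 k1 k2 : S} (h01 : IsRelPrime a0 a1) (ha : a0 ≠ 0)
    (hreg : ∀ k, k * a2 ∈ Ideal.span {a0, a1} → k ∈ Ideal.span {a0, a1})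
    (h : k0 * a0 + k1 * a1 + k2 * a2 = 0) :
    ∃ r p q, k0 = r * a1 - p * a2 ∧ k1 = -r * a0 - q * a2 ∧ k2 = p * a0 + q * a1 := by
  have h1 : k2 ∈ Ideal.span {a0, a1} := by
    apply hreg
    rw [Ideal.mem_span_pair]
    exact ⟨-k0, -k1, by linear_combination -h⟩
  obtain ⟨p, q, hpq⟩ := Ideal.mem_span_pair.1 h1
  obtain ⟨r, hr1, hr2⟩ := relprime_syz (p := k0 + p * a2) (q := k1 + q * a2) h01 ha
    (by rw [← hpq] at h; linear_combination h)
  exact ⟨r, p, q, by linear_combination hr1, by linear_combination hr2, hpq.symm⟩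

lemma X_relprime {i j : Fin 3} (h : i ≠ j) (N : ℕ) :
    IsRelPrime ((X i : S) ^ N) ((X j : S) ^ N) := by
  apply IsRelPrime.pow
  have hp : Prime (X i : S) := MvPolynomial.X_prime
  rw [hp.irreducible.isRelPrime_iff_not_dvd]
  rw [X_dvd_X]
  simpa using h

lemma X_pow_reg (N : ℕ) (k : S)
    (h : k * X 2 ^ N ∈ Ideal.span {(X 0 : S) ^ N, (X 1 : S) ^ N}) :
    k ∈ Ideal.span {(X 0 : S) ^ N, (X 1 : S) ^ N} := by
  have e : ({(X 0 : S) ^ N, (X 1 : S) ^ N} : Set S) =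
      (fun s => monomial s (1 : ℂ)) '' {Finsupp.single 0 N, Finsupp.single 1 N} := by
    rw [Set.image_pair, X_pow_eq_monomial, X_pow_eq_monomial]
  rw [e, mem_ideal_span_monomial_image] at h ⊢
  intro d hd
  obtain ⟨s, hs, hle⟩ := h (d + Finsupp.single 2 N) (by
    rw [mem_support_iff, X_pow_eq_monomial, coeff_mul_monomial, mul_one]
    exact mem_support_iff.1 hd)
  refine ⟨s, hs, ?_⟩
  rcases hs with rfl | rfl
  · rw [Finsupp.single_le_iff] at hle ⊢
    simpa using hle
  · rw [Finsupp.single_le_iff] at hle ⊢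
    simpa using hle

/-- `(a, b)` has no embedded component at the origin. -/
lemma saturated {a b c : S} (hab : IsRelPrime a b) (ha : a ≠ 0) (hb : b ≠ 0) (N : ℕ)
    (h : ∀ t : Fin 3, c * X t ^ N ∈ Ideal.span {a, b}) : c ∈ Ideal.span {a, b} := by
  choose p q hpq using fun t => Ideal.mem_span_pair.1 (h t)
  have hX : ∀ t : Fin 3, (X t : S) ^ N ≠ 0 := fun t => pow_ne_zero _ (X_ne_zero t)
  have e0 := hpq 0
  have e1 := hpq 1
  have e2 := hpq 2
  obtain ⟨x0, hx0⟩ : ∃ x0, x0 = (X 0 : S) ^ N := ⟨_, rfl⟩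
  obtain ⟨x1, hx1⟩ : ∃ x0, x0 = (X 1 : S) ^ N := ⟨_, rfl⟩
  obtain ⟨x2, hx2⟩ : ∃ x0, x0 = (X 2 : S) ^ N := ⟨_, rfl⟩
  have r01 : IsRelPrime x0 x1 := by rw [hx0, hx1]; exact X_relprime (by decide) N
  have hx0' : x0 ≠ 0 := by rw [hx0]; exact hX 0
  have hreg : ∀ k, k * x2 ∈ Ideal.span {x0, x1} → k ∈ Ideal.span {x0, x1} := by
    rw [hx0, hx1, hx2]; exact X_pow_reg N
  rw [← hx0] at e0
  rw [← hx1] at e1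
  rw [← hx2] at e2
  obtain ⟨k01, u01, v01⟩ := relprime_syz (p := p 0 * x1 - p 1 * x0)
    (q := q 0 * x1 - q 1 * x0) hab ha (by linear_combination x1 * e0 - x0 * e1)
  obtain ⟨k02, u02, v02⟩ := relprime_syz (p := p 0 * x2 - p 2 * x0)
    (q := q 0 * x2 - q 2 * x0) hab ha (by linear_combination x2 * e0 - x0 * e2)
  obtain ⟨k12, u12, v12⟩ := relprime_syz (p := p 1 * x2 - p 2 * x1)
    (q := q 1 * x2 - q 2 * x1) hab ha (by linear_combination x2 * e1 - x1 * e2)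
  have hk : k12 * x0 + (-k02) * x1 + k01 * x2 = 0 := by
    apply mul_right_cancel₀ hb
    linear_combination -x2 * u01 + x1 * u02 - x0 * u12
  obtain ⟨r, s, t, w1, w2, w3⟩ := koszul3 r01 hx0' hreg hk
  have hP : (p 0 - t * b) * x1 = (p 1 + s * b) * x0 := by
    rw [w3] at u01; linear_combination u01
  have hQ : (q 0 + t * a) * x1 = (q 1 - s * a) * x0 := by
    rw [w3] at v01; linear_combination v01
  obtain ⟨P, hP'⟩ := r01.dvd_of_dvd_mul_right ⟨_, hP.trans (mul_comm _ _)⟩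
  obtain ⟨Q, hQ'⟩ := r01.dvd_of_dvd_mul_right ⟨_, hQ.trans (mul_comm _ _)⟩
  rw [Ideal.mem_span_pair]
  refine ⟨P, Q, ?_⟩
  apply mul_right_cancel₀ hx0'
  linear_combination e0 - a * hP' - b * hQ'

lemma saturated_of_zeros {a b c : S} (hab : IsRelPrime a b) (ha : a ≠ 0) (hb : b ≠ 0) (s : Set S)
    (hs : ∀ p : Fin 3 → ℂ, (∀ g ∈ s, eval p g = 0) → p = 0)
    (h : ∀ g ∈ s, c * g ∈ Ideal.span {a, b}) : c ∈ Ideal.span {a, b} := by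
  obtain ⟨N, hN⟩ := X_pow_mem_of_zeros s hs
  refine saturated hab ha hb N fun t => ?_
  have : Ideal.span s ≤ Submodule.comap (LinearMap.mulLeft S c) (Ideal.span {a, b}) := by
    rw [Ideal.span_le]
    intro g hg
    exact h g hg
  exact this (hN t)

lemma homog_eval_zero {a : S} {n : ℕ} (ha : a.IsHomogeneous n) (hn : 1 ≤ n) : eval 0 a = 0 := by
  have : constantCoeff a = 0 := by
    by_contra hne
    have := ha (d := 0) hne
    simp at this
    omega
  rw [← this]
  exact congrFun (congrArg DFunLike.coe (MvPolynomial.eval_zero (R := ℂ) (σ := Fin 3))) a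

/-- Three positive degree homogeneous forms with the origin as only common zero. -/
lemma regular_triple {a b c : S} {n1 n2 n3 : ℕ} (ha : a.IsHomogeneous n1) (hb : b.IsHomogeneous n2)
    (hc : c.IsHomogeneous n3) (h1 : 1 ≤ n1) (h2 : 1 ≤ n2) (h3 : 1 ≤ n3)
    (h : ∀ p, eval p a = 0 → eval p b = 0 → eval p c = 0 → p = 0) :
    a ≠ 0 ∧ b ≠ 0 ∧ IsRelPrime a b ∧
    ∀ k, k * c ∈ Ideal.span {a, b} → k ∈ Ideal.span {a, b} := by
  have ha0 := homog_eval_zero ha h1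
  have hb0 := homog_eval_zero hb h2
  have hc0 := homog_eval_zero hc h3
  have hane : a ≠ 0 := by
    rintro rfl
    obtain ⟨p, hp, hpb, hpc⟩ := exists_common_zero b c hb0 hc0
    exact hp (h p (by simp) hpb hpc)
  have hbne : b ≠ 0 := by
    rintro rfl
    obtain ⟨p, hp, hpb, hpc⟩ := exists_common_zero a c ha0 hc0
    exact hp (h p hpb (by simp) hpc)
  have hrel : IsRelPrime a b := by
    intro g hga hgb
    rcases dvd_homog ha hane hga with hu | hg0
    · exact hu
    · exfalso
      obtain ⟨p, hp, hpg, hpc⟩ := exists_common_zero g c hg0 hc0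
      obtain ⟨a', rfl⟩ := hga
      obtain ⟨b', rfl⟩ := hgb
      exact hp (h p (by simp [hpg]) (by simp [hpg]) hpc)
  refine ⟨hane, hbne, hrel, fun k hk => ?_⟩
  refine saturated_of_zeros hrel hane hbne {a, b, c} (fun p hp => ?_) ?_
  · exact h p (hp a (by simp)) (hp b (by simp)) (hp c (by simp))
  · rintro g (rfl | rfl | rfl)
    · exact Ideal.mul_mem_left _ _ (Ideal.subset_span (by simp))
    · exact Ideal.mul_mem_left _ _ (Ideal.subset_span (by simp))
    · exact hk
set_option maxHeartbeats 1000000 in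
open Matrix in
lemma grad_good {g : S} {n : ℕ} (hg : g.IsHomogeneous n) (hn : 1 ≤ n)
    (hs : ∀ p : Fin 3 → ℂ, (∀ t, eval p (pderiv t g) = 0) → p = 0) :
    (∀ β : Fin 3 → S, β ⬝ᵥ grad g = 0 → ∃ γ, β = γ ⨯₃ grad g) ∧
    (∀ α : Fin 3 → S, α ⨯₃ grad g = 0 → ∃ c : S, α = c • grad g) ∧
    (∀ a : S, (∀ t, g ∣ a * pderiv t g) → g ∣ a) := by
  have hg0 : g ≠ 0 := by
    rintro rfl
    have := hs 1 (by simp)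
    exact one_ne_zero this
  rcases Nat.lt_or_ge n 2 with h1 | h2
  · -- degree one: the gradient is a nonzero constant vector
    have hn1 : n - 1 = 0 := by omega
    obtain ⟨u, hu⟩ : ∃ u : Fin 3 → S, u ⬝ᵥ grad g = 1 := by
      have : ∃ t, eval 1 (pderiv t g) ≠ 0 := by
        by_contra! hcon
        exact one_ne_zero (hs 1 hcon)
      obtain ⟨t, ht⟩ := this
      have hh : (pderiv t g).IsHomogeneous 0 := by
        have := hg.pderiv (i := t)
        rwa [hn1] at this
      have hC : pderiv t g = C (coeff 0 (pderiv t g)) :=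
        totalDegree_eq_zero_iff_eq_C.1 (Nat.le_zero.1 hh.totalDegree_le)
      rw [hC, eval_C] at ht
      refine ⟨Pi.single t (C (coeff 0 (pderiv t g))⁻¹), ?_⟩
      rw [single_dotProduct]
      show C _ * pderiv t g = 1
      conv_lhs => rw [hC]
      rw [coeff_C, if_pos rfl, ← C_mul, inv_mul_cancel₀ ht, C_1]
    refine ⟨fun β hβ => ⟨u ⨯₃ β, ?_⟩, fun α hα => ⟨u ⬝ᵥ α, ?_⟩, fun a ha => ?_⟩
    · rw [cross_cross_eq_smul_sub_smul, hβ, hu]; simp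
    · have := cross_cross_eq_smul_sub_smul' u α (grad g)
      rw [hα, hu, map_zero, one_smul, dotProduct_comm α u] at this
      exact (sub_eq_zero.1 this.symm)
    · have : a = ∑ t, u t * (a * pderiv t g) := by
        calc a = a * (u ⬝ᵥ grad g) := by rw [hu, mul_one]
          _ = _ := by
            rw [dotProduct, Finset.mul_sum]
            exact Finset.sum_congr rfl fun t _ => by simp only [grad]; ring
      rw [this]
      exact Finset.dvd_sum fun t _ => (ha t).mul_left _
  · have hh : ∀ t, (pderiv t g).IsHomogeneous (n - 1) := fun t => hg.pderiv
    have hz : ∀ p : Fin 3 → ℂ, eval p (pderiv 0 g) = 0 → eval p (pderiv 1 g) = 0 →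
        eval p (pderiv 2 g) = 0 → p = 0 := by
      intro p a b c
      refine hs p fun t => ?_
      match t with
      | 0 => exact a
      | 1 => exact b
      | 2 => exact c
    obtain ⟨ha, hb, hrel, hreg⟩ := regular_triple (hh 0) (hh 1) (hh 2) (by omega) (by omega)
      (by omega) hz
    refine ⟨fun β hβ => ?_, fun α hα => ?_, fun a hd => ?_⟩
    · rw [vec3_dotProduct] at hβ
      obtain ⟨r, p, q, h0, h1, h2⟩ := koszul3 hrel ha hreg hβ
      refine ⟨![q, -p, -r], ?_⟩
      rw [cross_apply]
      ext1 t
      fin_cases t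
      · simp [grad, h0]; ring
      · simp [grad, h1]
      · simp [grad, h2]; ring
    · rw [cross_apply] at hα
      have e0 := congrFun hα 0
      have e1 := congrFun hα 1
      have e2 := congrFun hα 2
      simp [grad] at e0 e1 e2
      obtain ⟨c, hc⟩ := hrel.dvd_of_dvd_mul_right (y := α 0) ⟨α 1, by linear_combination e2⟩
      refine ⟨c, ?_⟩
      ext1 t
      fin_cases t
      · simp [grad, hc]; ring
      · simp only [grad, Fin.mk_one, Pi.smul_apply, smul_eq_mul]
        apply mul_right_cancel₀ ha
        linear_combination -e2 + pderiv 1 g * hc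
      · simp only [grad, Fin.reduceFinMk, Pi.smul_apply, smul_eq_mul]
        apply mul_right_cancel₀ ha
        linear_combination e1 + pderiv 2 g * hc
    · obtain ⟨N, hN⟩ := X_pow_mem_of_zeros (Set.range fun t => pderiv t g) (by
        intro p hp
        exact hs p fun t => hp _ ⟨t, rfl⟩)
      have key : ∀ t : Fin 3, g ∣ a * X t ^ N := by
        intro t
        have : Ideal.span (Set.range fun t => pderiv t g) ≤
            Submodule.comap (LinearMap.mulLeft S a) (Ideal.span {g}) := by
          rw [Ideal.span_le]
          rintro _ ⟨t, rfl⟩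
          exact Ideal.mem_span_singleton.2 (hd t)
        exact Ideal.mem_span_singleton.1 (this (hN t))
      obtain ⟨u, hu⟩ := key 0
      obtain ⟨w, hw⟩ := key 1
      have hr := X_relprime (show (0 : Fin 3) ≠ 1 by decide) N
      have huw : u * X 1 ^ N = X 0 ^ N * w := by
        apply mul_left_cancel₀ hg0
        linear_combination (-X 1 ^ N) * hu + X 0 ^ N * hw
      obtain ⟨u', rfl⟩ := hr.dvd_of_dvd_mul_right ⟨w, huw⟩
      refine ⟨u', ?_⟩
      apply mul_right_cancel₀ (pow_ne_zero N (X_ne_zero (R := ℂ) (0 : Fin 3)))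
      rw [hu]; ring

open Matrix in
lemma residue {g : S} {n : ℕ} (hg : g.IsHomogeneous n) (hn : 1 ≤ n)
    (hs : ∀ p : Fin 3 → ℂ, (∀ t, eval p (pderiv t g) = 0) → p = 0)
    (α : Fin 3 → S) (β : Fin 3 → S) (h : α ⨯₃ grad g = g • β) :
    ∃ (c : S) (γ : Fin 3 → S), α = c • grad g + g • γ := by
  have hg0 : g ≠ 0 := by
    rintro rfl
    have := hs 1 (by simp)
    exact one_ne_zero this
  obtain ⟨k1, k2, -⟩ := grad_good hg hn hs
  have h1 : β ⬝ᵥ grad g = 0 := by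
    have : (g • β) ⬝ᵥ grad g = 0 := by rw [← h, dotProduct_comm, dot_cross_self]
    rw [smul_dotProduct, smul_eq_mul] at this
    exact (mul_eq_zero.1 this).resolve_left hg0
  obtain ⟨γ, rfl⟩ := k1 β h1
  obtain ⟨c, hc⟩ := k2 (α - g • γ) (by
    rw [map_sub, LinearMap.sub_apply, h, map_smul, LinearMap.smul_apply, sub_self])
  exact ⟨c, γ, by rw [← hc]; simp⟩

lemma pderiv_prod {ι : Type} [DecidableEq ι] (F : ι → S) (s : Finset ι) (t : Fin 3) :
    pderiv t (∏ i ∈ s, F i) = ∑ i ∈ s, (∏ k ∈ s.erase i, F k) * pderiv t (F i) := by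
  induction s using Finset.induction_on with
  | empty => simp
  | insert a s ha ih =>
    rw [Finset.prod_insert ha, Derivation.leibniz, ih, Finset.sum_insert ha,
      Finset.erase_insert ha, smul_eq_mul, smul_eq_mul, Finset.mul_sum, add_comm]
    congr 1
    refine Finset.sum_congr rfl fun i hi => ?_
    have hia : a ≠ i := fun h => ha (h ▸ hi)
    rw [Finset.erase_insert_of_ne hia, Finset.prod_insert (by simp [ha])]
    ring

lemma grad_prod {m : ℕ} (F : Fin m → S) :
    grad (∏ i, F i) = ∑ i, (∏ k ∈ Finset.univ.erase i, F k) • grad (F i) := by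
  ext1 t
  simp only [grad, Finset.sum_apply, Pi.smul_apply, smul_eq_mul]
  exact pderiv_prod F _ t

open Matrix in
lemma smul_rho {m : ℕ} (F : Fin m → S) (j : Fin m) :
    F j • rho F j = grad (∏ i, F i) ⨯₃ grad (F j) := by
  rw [grad_prod, map_sum, LinearMap.sum_apply, rho, Finset.smul_sum,
    ← Finset.add_sum_erase _ _ (Finset.mem_univ j)]
  simp only [map_smul, LinearMap.smul_apply, cross_self, smul_zero, zero_add]
  refine Finset.sum_congr rfl fun i hi => ?_
  rw [smul_smul, Finset.erase_right_comm, Finset.mul_prod_erase]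
  simp only [Finset.mem_erase, Finset.mem_univ, and_true] at hi ⊢
  exact hi.symm

open Matrix in
lemma sum_rho {m : ℕ} (F : Fin m → S) (hne : ∀ i, F i ≠ 0) : ∑ j, rho F j = 0 := by
  have hf : (∏ i, F i) ≠ 0 := Finset.prod_ne_zero_iff.2 fun i _ => hne i
  have : (∏ i, F i) • ∑ j, rho F j = 0 := by
    rw [← cross_self (grad (∏ i, F i))]
    conv_rhs => rw [grad_prod F, map_sum, ← grad_prod F]
    rw [Finset.smul_sum]
    refine Finset.sum_congr rfl fun j _ => ?_
    rw [map_smul, ← smul_rho, smul_smul, Finset.prod_erase_mul _ _ (Finset.mem_univ j)]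
  exact (smul_eq_zero.1 this).resolve_left hf

lemma mem_span_prod {ι : Type} [DecidableEq ι] (F : ι → S) (j : ι)
    (hreg : ∀ i k w, i ≠ j → k ≠ j → i ≠ k →
      w * F k ∈ Ideal.span {F j, F i} → w ∈ Ideal.span {F j, F i})
    (c : S) (hc : ∀ i, i ≠ j → c ∈ Ideal.span {F j, F i}) (s : Finset ι) (hs : j ∉ s) :
    c ∈ Ideal.span {F j, ∏ i ∈ s, F i} := by
  have hregs : ∀ (s : Finset ι) i w, i ≠ j → j ∉ s → i ∉ s →
      w * ∏ k ∈ s, F k ∈ Ideal.span {F j, F i} → w ∈ Ideal.span {F j, F i} := by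
    intro s
    induction s using Finset.induction_on with
    | empty => intro i w _ _ _ h; simpa using h
    | insert a s ha ih =>
      intro i w hij hjs his h
      simp only [Finset.mem_insert, not_or] at hjs his
      apply hreg i a w hij (Ne.symm hjs.1) his.1
      apply ih i (w * F a) hij hjs.2 his.2
      rwa [Finset.prod_insert ha, ← mul_assoc] at h
  induction s using Finset.induction_on with
  | empty =>
    rw [Finset.prod_empty]
    exact Ideal.mem_span_pair.2 ⟨0, c, by ring⟩
  | insert a s ha ih =>
    simp only [Finset.mem_insert, not_or] at hs
    obtain ⟨u, w, huw⟩ := Ideal.mem_span_pair.1 (ih hs.2)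
    have h1 : w * ∏ k ∈ s, F k ∈ Ideal.span {F j, F a} := by
      have h2 := hc a (Ne.symm hs.1)
      obtain ⟨u', w', h'⟩ := Ideal.mem_span_pair.1 h2
      exact Ideal.mem_span_pair.2 ⟨u' - u, w', by linear_combination h' - huw⟩
    obtain ⟨u', w', h'⟩ := Ideal.mem_span_pair.1 (hregs s a w (Ne.symm hs.1) hs.2 ha h1)
    rw [Finset.prod_insert ha]
    exact Ideal.mem_span_pair.2 ⟨u + u' * ∏ k ∈ s, F k, w', by
      rw [← huw, ← h']; ring⟩

open Matrix in
lemma eval_cross (p : Fin 3 → ℂ) (a b : Fin 3 → S) :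
    (fun t => eval p ((a ⨯₃ b) t)) = (fun t => eval p (a t)) ⨯₃ (fun t => eval p (b t)) := by
  ext1 t
  fin_cases t <;> simp [cross_apply]

open Matrix in
lemma cross_sat {g h c : S} (hgh : IsRelPrime g h) (hg : g ≠ 0) (hh : h ≠ 0)
    (hnc : ∀ p : Fin 3 → ℂ, p ≠ 0 → eval p g = 0 → eval p h = 0 →
      LinearIndependent ℂ ![fun t => eval p (pderiv t g), fun t => eval p (pderiv t h)])
    (hc : ∀ t, c * (grad g ⨯₃ grad h) t ∈ Ideal.span {g, h}) : c ∈ Ideal.span {g, h} := by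
  refine saturated_of_zeros hgh hg hh ({g, h} ∪ Set.range (grad g ⨯₃ grad h)) ?_ ?_
  · intro p hp
    by_contra hp0
    have h1 := hnc p hp0 (hp g (by simp)) (hp h (by simp))
    rw [← crossProduct_ne_zero_iff_linearIndependent] at h1
    apply h1
    have := eval_cross p (grad g) (grad h)
    simp only [grad] at this
    rw [← this]
    ext1 t
    exact hp _ (Or.inr ⟨t, rfl⟩)
  · rintro q ((rfl | rfl) | ⟨t, rfl⟩)
    · exact Ideal.mul_mem_left _ _ (Ideal.subset_span (by simp))
    · exact Ideal.mul_mem_left _ _ (Ideal.subset_span (by simp))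
    · exact hc t

/-- The hypotheses of the main theorem in a usable form. -/
structure Good {m : ℕ} (F : Fin m → S) (e : Fin m → ℕ) : Prop where
  he : ∀ j, 1 ≤ e j
  hhom : ∀ j, (F j).IsHomogeneous (e j)
  hsmooth : ∀ j, ∀ p : Fin 3 → ℂ, (∀ t, eval p (pderiv t (F j)) = 0) → p = 0
  hnc : ∀ i j : Fin m, i ≠ j → ∀ p : Fin 3 → ℂ, p ≠ 0 →
      eval p (F i) = 0 → eval p (F j) = 0 →
      LinearIndependent ℂ
        ![fun t => eval p (pderiv t (F i)), fun t => eval p (pderiv t (F j))]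
  hne : ∀ i, F i ≠ 0
  hrel : ∀ i j, i ≠ j → IsRelPrime (F i) (F j)
  hreg : ∀ i j k, i ≠ j → i ≠ k → j ≠ k → ∀ w,
    w * F k ∈ Ideal.span {F i, F j} → w ∈ Ideal.span {F i, F j}

lemma good_of {m : ℕ} (hm : 4 ≤ m) (F : Fin m → S) (e : Fin m → ℕ)
    (he : ∀ j, 1 ≤ e j)
    (hhom : ∀ j, (F j).IsHomogeneous (e j))
    (hsmooth : ∀ j, ∀ p : Fin 3 → ℂ,
      (∀ t, eval p (pderiv t (F j)) = 0) → p = 0)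
    (hnc : ∀ i j : Fin m, i ≠ j → ∀ p : Fin 3 → ℂ, p ≠ 0 →
      eval p (F i) = 0 → eval p (F j) = 0 →
      LinearIndependent ℂ
        ![fun t => eval p (pderiv t (F i)), fun t => eval p (pderiv t (F j))])
    (htriple : ∀ i j k : Fin m, i ≠ j → i ≠ k → j ≠ k → ∀ p : Fin 3 → ℂ, p ≠ 0 →
      ¬(eval p (F i) = 0 ∧ eval p (F j) = 0 ∧ eval p (F k) = 0)) : Good F e := by
  have key : ∀ i j k, i ≠ j → i ≠ k → j ≠ k → F i ≠ 0 ∧ F j ≠ 0 ∧ IsRelPrime (F i) (F j) ∧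
      ∀ w, w * F k ∈ Ideal.span {F i, F j} → w ∈ Ideal.span {F i, F j} := by
    intro i j k hij hik hjk
    refine regular_triple (hhom i) (hhom j) (hhom k) (he i) (he j) (he k) fun p h1 h2 h3 => ?_
    by_contra hp
    exact htriple i j k hij hik hjk p hp ⟨h1, h2, h3⟩
  have third : ∀ i j : Fin m, ∃ k, i ≠ k ∧ j ≠ k := by
    intro i j
    by_contra! hcon
    have h1 : (Finset.univ : Finset (Fin m)) ⊆ {i, j} := by
      intro k _
      by_cases h : i = k
      · simp [h]
      · simp [← hcon k h]
    have h2 := (Finset.card_le_card h1).trans Finset.card_le_two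
    simp at h2
    omega
  refine ⟨he, hhom, hsmooth, hnc, fun i => ?_, fun i j hij => ?_, fun i j k hij hik hjk => ?_⟩
  · obtain ⟨k, hk, -⟩ := third i i
    obtain ⟨l, hl, hl'⟩ := third i k
    exact (key i k l hk hl hl').1
  · obtain ⟨k, hk, hk'⟩ := third i j
    exact (key i j k hij hk hk').2.2.1
  · exact (key i j k hij hik hjk).2.2.2

open Matrix in
lemma euler_grad {g : S} {n : ℕ} (hg : g.IsHomogeneous n) :
    (grad g) ⬝ᵥ (fun t => (X t : S)) = (n : S) * g := by
  have := hg.sum_X_mul_pderiv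
  rw [nsmul_eq_mul] at this
  rw [← this, dotProduct]
  exact Finset.sum_congr rfl fun t _ => mul_comm _ _

open Matrix in
lemma D0_dvd {m : ℕ} {F : Fin m → S} {e : Fin m → ℕ} (H : Good F e) {v : Fin 3 → S}
    (hv : v ∈ D0 (∏ i, F i)) (j : Fin m) : F j ∣ v ⬝ᵥ grad (F j) := by
  have h0 : v ⬝ᵥ grad (∏ i, F i) = 0 := hv
  rw [grad_prod, dotProduct_sum, ← Finset.add_sum_erase _ _ (Finset.mem_univ j)] at h0
  have h1 : F j ∣ v ⬝ᵥ (∏ k ∈ Finset.univ.erase j, F k) • grad (F j) := by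
    rw [eq_neg_of_add_eq_zero_left h0]
    apply Dvd.dvd.neg_right
    refine Finset.dvd_sum fun i hi => ?_
    rw [dotProduct_smul, smul_eq_mul]
    refine Dvd.dvd.mul_right (Finset.dvd_prod_of_mem _ ?_) _
    simpa [eq_comm] using hi
  rw [dotProduct_smul, smul_eq_mul] at h1
  refine IsRelPrime.dvd_of_dvd_mul_left (IsRelPrime.prod_right fun k hk => H.hrel _ _ ?_) h1
  simpa [eq_comm] using hk

open Matrix in
lemma log_form {m : ℕ} {F : Fin m → S} {e : Fin m → ℕ} (H : Good F e) {v : Fin 3 → S}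
    (hv : v ∈ D0 (∏ i, F i)) :
    ∃ (g : Fin m → S) (β : Fin 3 → S), v ⨯₃ (fun t => (X t : S)) =
      (∏ i, F i) • β + ∑ j, (g j * ∏ k ∈ Finset.univ.erase j, F k) • grad (F j) := by
  set α : Fin 3 → S := v ⨯₃ (fun t => (X t : S)) with hα
  have h1 : ∀ j, ∃ (c : S) (γ : Fin 3 → S), α = c • grad (F j) + F j • γ := by
    intro j
    obtain ⟨h, hh⟩ := D0_dvd H hv j
    refine residue (H.hhom j) (H.he j) (H.hsmooth j) α
      (h • (fun t => (X t : S)) - (e j : S) • v) ?_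
    rw [hα, cross_cross_eq_smul_sub_smul, hh, dotProduct_comm _ (grad (F j)),
      euler_grad (H.hhom j), smul_sub, smul_smul, smul_smul, mul_comm (e j : S)]
  choose c γ hc using h1
  have h2 : ∀ j i, i ≠ j → c j ∈ Ideal.span {F j, F i} := by
    intro j i hij
    refine cross_sat (H.hrel j i hij.symm) (H.hne j) (H.hne i) (H.hnc j i hij.symm) fun t => ?_
    have e1 : α ⨯₃ grad (F i) = F i • (γ i ⨯₃ grad (F i)) := by
      conv_lhs => rw [hc i]
      simp [map_add, LinearMap.add_apply, map_smul, LinearMap.smul_apply, cross_self]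
    have e2 : α ⨯₃ grad (F i) = c j • (grad (F j) ⨯₃ grad (F i)) +
        F j • (γ j ⨯₃ grad (F i)) := by
      conv_lhs => rw [hc j]
      simp only [map_add, LinearMap.add_apply, map_smul, LinearMap.smul_apply]
    have e3 := congrFun (e2.symm.trans e1) t
    simp only [Pi.add_apply, Pi.smul_apply, smul_eq_mul] at e3
    exact Ideal.mem_span_pair.2 ⟨-(γ j ⨯₃ grad (F i)) t, (γ i ⨯₃ grad (F i)) t, by
      linear_combination -e3⟩
  have h3 : ∀ j, c j ∈ Ideal.span {F j, ∏ k ∈ Finset.univ.erase j, F k} := fun j =>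
    mem_span_prod F j (fun i k w hi hk hik h => H.hreg j i k hi.symm hk.symm hik w h) (c j)
      (h2 j) _ (by simp)
  choose u g hug using fun j => Ideal.mem_span_pair.1 (h3 j)
  -- the remainder is divisible by every factor
  have h4 : ∀ t, (∏ i, F i) ∣
      (α - ∑ j, (g j * ∏ k ∈ Finset.univ.erase j, F k) • grad (F j)) t := by
    intro t
    refine Fintype.prod_dvd_of_isRelPrime (fun i j hij => H.hrel i j hij) fun j => ?_
    rw [← Finset.add_sum_erase _ _ (Finset.mem_univ j)]
    have e1 : α - ((g j * ∏ k ∈ Finset.univ.erase j, F k) • grad (F j) +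
        ∑ i ∈ Finset.univ.erase j, (g i * ∏ k ∈ Finset.univ.erase i, F k) • grad (F i)) =
        F j • (u j • grad (F j) + γ j) -
        ∑ i ∈ Finset.univ.erase j, (g i * ∏ k ∈ Finset.univ.erase i, F k) • grad (F i) := by
      conv_lhs => rw [hc j, ← hug j]
      module
    rw [e1, Pi.sub_apply, Finset.sum_apply]
    refine dvd_sub ⟨_, rfl⟩ (Finset.dvd_sum fun i hi => ?_)
    simp only [Pi.smul_apply, smul_eq_mul]
    refine Dvd.dvd.mul_right (Dvd.dvd.mul_left (Finset.dvd_prod_of_mem _ ?_) _) _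
    simpa [eq_comm] using hi
  choose β hβ using h4
  refine ⟨g, β, ?_⟩
  have : α - ∑ j, (g j * ∏ k ∈ Finset.univ.erase j, F k) • grad (F j) = (∏ i, F i) • β := by
    ext1 t
    exact hβ t
  rw [← this]; simp

lemma prod_homog {m : ℕ} {F : Fin m → S} {e : Fin m → ℕ} (H : Good F e) :
    (∏ i, F i).IsHomogeneous (∑ i, e i) :=
  IsHomogeneous.prod _ _ _ fun i _ => H.hhom i

lemma deg_ne {m : ℕ} (hm : 4 ≤ m) {F : Fin m → S} {e : Fin m → ℕ} (H : Good F e) :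
    ∑ i, e i ≠ 0 := by
  intro h
  have := (Finset.sum_eq_zero_iff.1 h) ⟨0, by omega⟩ (Finset.mem_univ _)
  have := H.he ⟨0, by omega⟩
  omega

lemma natCast_S_ne {n : ℕ} (h : n ≠ 0) : (n : S) ≠ 0 := by
  exact_mod_cast h

open Matrix in
lemma generates {m : ℕ} {F : Fin m → S} {e : Fin m → ℕ} (H : Good F e) {v : Fin 3 → S}
    (hv : v ∈ D0 (∏ i, F i)) :
    ∃ (g : Fin m → S) (β : Fin 3 → S), ((∑ i, e i : ℕ) : S) • v =
      grad (∏ i, F i) ⨯₃ β + ∑ j, g j • rho F j := by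
  obtain ⟨g, β, h⟩ := log_form H hv
  have hf : (∏ i, F i) ≠ 0 := Finset.prod_ne_zero_iff.2 fun i _ => H.hne i
  refine ⟨g, β, ?_⟩
  have h0 : v ⬝ᵥ grad (∏ i, F i) = 0 := hv
  have h1 := cross_cross_eq_smul_sub_smul' (grad (∏ i, F i)) v (fun t => (X t : S))
  rw [h0, zero_smul, sub_zero, euler_grad (prod_homog H), h, map_add, map_smul, map_sum] at h1
  have h2 : (∏ i, F i) • (((∑ i, e i : ℕ) : S) • v -
      (grad (∏ i, F i) ⨯₃ β + ∑ j, g j • rho F j)) = 0 := by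
    rw [smul_sub, smul_smul, mul_comm, ← h1, smul_add, sub_eq_zero]
    congr 1
    rw [Finset.smul_sum]
    refine Finset.sum_congr rfl fun j _ => ?_
    rw [map_smul, ← smul_rho, smul_smul, smul_smul,
      ← Finset.mul_prod_erase _ _ (Finset.mem_univ j)]
    congr 1; ring
  exact sub_eq_zero.1 ((smul_eq_zero.1 h2).resolve_left hf)

open Matrix in
lemma rho_mem_D0 {m : ℕ} {F : Fin m → S} {e : Fin m → ℕ} (H : Good F e) (j : Fin m) :
    rho F j ∈ D0 (∏ i, F i) := by
  show rho F j ⬝ᵥ grad (∏ i, F i) = 0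
  have : (F j • rho F j) ⬝ᵥ grad (∏ i, F i) = 0 := by
    rw [smul_rho, dotProduct_comm, dot_self_cross]
  rw [smul_dotProduct, smul_eq_mul] at this
  exact (mul_eq_zero.1 this).resolve_left (H.hne j)

lemma sigz_mem_D0 (f : S) : sigz f ∈ D0 f := by
  show ∑ t, sigz f t * pderiv t f = 0
  rw [Fin.sum_univ_three]
  simp [sigz]; ring

open Matrix in
lemma cross_grad_X0 (f : S) : grad f ⨯₃ grad (X 0) = sigx f := by
  ext1 t
  fin_cases t <;> simp [cross_apply, grad, sigx, pderiv_X]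

open Matrix in
lemma cross_grad_X1 (f : S) : grad f ⨯₃ grad (X 1) = sigy f := by
  ext1 t
  fin_cases t <;> simp [cross_apply, grad, sigy, pderiv_X]

open Matrix in
lemma cross_ez (f : S) : grad f ⨯₃ ![0, 0, 1] = sigz f := by
  ext1 t
  fin_cases t <;> simp [cross_apply, grad, sigz]

open Matrix in
lemma cross_decomp (f : S) (β : Fin 3 → S) :
    grad f ⨯₃ β = β 0 • sigx f + β 1 • sigy f + β 2 • sigz f := by
  ext1 t
  fin_cases t <;> simp [cross_apply, grad, sigx, sigy, sigz] <;> ring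

lemma D0_eq {n : ℕ} (hm : 4 ≤ n + 1) {F : Fin (n + 1) → S} {e : Fin (n + 1) → ℕ} (H : Good F e)
    (hF1 : F ⟨0, by omega⟩ = X 0) (hF2 : F ⟨1, by omega⟩ = X 1) :
    D0 (∏ i, F i) = Submodule.span S (Set.range (G2 F)) := by
  apply le_antisymm
  · have hz : sigz (∏ i, F i) ∈ Submodule.span S (Set.range (G2 F)) :=
      Submodule.subset_span ⟨Sum.inr 0, rfl⟩
    have hcs : ∀ j : Fin n, rho F j.castSucc ∈ Submodule.span S (Set.range (G2 F)) := fun j =>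
      Submodule.subset_span ⟨Sum.inl j, rfl⟩
    have hr : ∀ j, rho F j ∈ Submodule.span S (Set.range (G2 F)) := by
      intro j
      refine Fin.lastCases ?_ hcs j
      have := sum_rho F H.hne
      rw [Fin.sum_univ_castSucc] at this
      rw [eq_neg_of_add_eq_zero_right this]
      exact Submodule.neg_mem _ (Submodule.sum_mem _ fun i _ => hcs i)
    have hx : sigx (∏ i, F i) ∈ Submodule.span S (Set.range (G2 F)) := by
      rw [← cross_grad_X0, ← hF1, ← smul_rho]
      exact Submodule.smul_mem _ _ (hr _)
    have hy : sigy (∏ i, F i) ∈ Submodule.span S (Set.range (G2 F)) := by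
      rw [← cross_grad_X1, ← hF2, ← smul_rho]
      exact Submodule.smul_mem _ _ (hr _)
    intro v hv
    obtain ⟨g, β, h⟩ := generates H hv
    have h1 : ((∑ i, e i : ℕ) : S) • v ∈ Submodule.span S (Set.range (G2 F)) := by
      rw [h, cross_decomp]
      exact Submodule.add_mem _ (Submodule.add_mem _ (Submodule.add_mem _
        (Submodule.smul_mem _ _ hx) (Submodule.smul_mem _ _ hy)) (Submodule.smul_mem _ _ hz))
        (Submodule.sum_mem _ fun j _ => Submodule.smul_mem _ _ (hr j))
    have hd : ((∑ i, e i : ℕ) : ℂ) ≠ 0 := by exact_mod_cast deg_ne hm H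
    have h2 := Submodule.smul_mem _ (C ((∑ i, e i : ℕ) : ℂ)⁻¹ : S) h1
    rw [smul_smul] at h2
    have h3 : (C ((∑ i, e i : ℕ) : ℂ)⁻¹ : S) * ((∑ i, e i : ℕ) : S) = 1 := by
      rw [← map_natCast (C : ℂ →+* S), ← C_mul, inv_mul_cancel₀ hd, C_1]
    rwa [h3, one_smul] at h2
  · rw [Submodule.span_le]
    rintro _ ⟨i | i, rfl⟩
    · exact rho_mem_D0 H _
    · fin_cases i
      exact sigz_mem_D0 _

set_option maxHeartbeats 1000000 in
open Matrix in
lemma relation {n : ℕ} (hm : 4 ≤ n + 1) {F : Fin (n + 1) → S} {e : Fin (n + 1) → ℕ}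
    (H : Good F e) (hz : ∀ j, eval 0 (pderiv 2 (F j)) = 0)
    (g : Fin (n + 1) → S) (h : S) (hlast : g (Fin.last n) = 0)
    (hrel : ∑ j, g j • rho F j + h • sigz (∏ i, F i) = 0) :
    (∀ j, eval 0 (g j) = 0) ∧ eval 0 h = 0 := by
  have hf : (∏ i, F i) ≠ 0 := Finset.prod_ne_zero_iff.2 fun i _ => H.hne i
  have hfP : ∀ j, (∏ i, F i) = F j * ∏ k ∈ Finset.univ.erase j, F k := fun j =>
    (Finset.mul_prod_erase _ _ (Finset.mem_univ j)).symm
  have hdeg := deg_ne hm H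
  have heul := euler_grad (prod_homog H)
  have hgp := grad_prod F
  set f := ∏ i, F i with hfdef
  set d := ∑ i, e i with hd
  set P : Fin (n + 1) → S := fun j => ∏ k ∈ Finset.univ.erase j, F k with hP
  obtain ⟨w, hw⟩ : ∃ w : Fin 3 → S,
      w = ∑ j, (g j * P j) • grad (F j) + (h * f) • ![0, 0, 1] := ⟨_, rfl⟩
  have hcw : grad f ⨯₃ w = 0 := by
    have : grad f ⨯₃ w = f • (∑ j, g j • rho F j + h • sigz f) := by
      rw [hw, map_add, map_sum, map_smul, cross_ez, smul_add, Finset.smul_sum]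
      congr 1
      · refine Finset.sum_congr rfl fun j _ => ?_
        rw [map_smul, ← smul_rho, smul_smul, smul_smul, hfP j]
        congr 1; ring
      · rw [smul_smul, mul_comm]
    rw [this, hrel, smul_zero]
  obtain ⟨K, hK⟩ : ∃ K : S, K = ∑ j, g j * (e j : S) + h * X 2 := ⟨_, rfl⟩
  have hEw : w ⬝ᵥ (fun t => (X t : S)) = f * K := by
    rw [hw, add_dotProduct, sum_dotProduct, hK, mul_add, Finset.mul_sum]
    congr 1
    · refine Finset.sum_congr rfl fun j _ => ?_
      rw [smul_dotProduct, euler_grad (H.hhom j), smul_eq_mul, hfP j]; ring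
    · rw [smul_dotProduct, vec3_dotProduct]; simp; ring
  have h1 : (d : S) • w = K • grad f := by
    have := cross_cross_eq_smul_sub_smul' (fun t => (X t : S)) (grad f) w
    rw [hcw, map_zero, heul, dotProduct_comm, hEw] at this
    have h2 : f • ((d : S) • w - K • grad f) = 0 := by
      rw [smul_sub, smul_smul, smul_smul, mul_comm f (d : S), ← neg_eq_zero, neg_sub]
      exact this.symm
    exact sub_eq_zero.1 ((smul_eq_zero.1 h2).resolve_left hf)
  have h2 : ∑ j, (((d : S) * g j - K) * P j) • grad (F j) + ((d : S) * h * f) • ![0, 0, 1] = 0 := by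
    have e1 : ∑ j, (((d : S) * g j - K) * P j) • grad (F j) =
        (d : S) • ∑ j, (g j * P j) • grad (F j) - K • ∑ j, P j • grad (F j) := by
      rw [Finset.smul_sum, Finset.smul_sum, ← Finset.sum_sub_distrib]
      refine Finset.sum_congr rfl fun j _ => ?_
      module
    rw [e1, ← hgp, ← h1, hw]
    module
  have h3 : ∀ j, F j ∣ (d : S) * g j - K := by
    intro j
    refine (grad_good (H.hhom j) (H.he j) (H.hsmooth j)).2.2 _ fun t => ?_
    have h4 := congrFun h2 t
    rw [← Finset.add_sum_erase _ _ (Finset.mem_univ j)] at h4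
    simp only [Pi.add_apply, Finset.sum_apply, Pi.smul_apply, smul_eq_mul, Pi.zero_apply] at h4
    have h5 : F j ∣ P j * (((d : S) * g j - K) * pderiv t (F j)) := by
      have e1 : P j * (((d : S) * g j - K) * pderiv t (F j)) =
          -(∑ i ∈ Finset.univ.erase j, ((d : S) * g i - K) * P i * grad (F i) t) -
          (d : S) * h * f * (![0, 0, 1] : Fin 3 → S) t := by
        simp only [grad] at h4 ⊢
        linear_combination h4
      rw [e1]
      refine dvd_sub ((Finset.dvd_sum fun i hi => ?_).neg_right) ?_
      · refine Dvd.dvd.mul_right (Dvd.dvd.mul_left (Finset.dvd_prod_of_mem _ ?_) _) _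
        simpa [eq_comm] using hi
      · refine Dvd.dvd.mul_right (Dvd.dvd.mul_left ⟨P j, hfP j⟩ _) _
    refine IsRelPrime.dvd_of_dvd_mul_left (IsRelPrime.prod_right fun k hk => H.hrel _ _ ?_) h5
    simpa [eq_comm] using hk
  choose u hu using h3
  have hdC : (d : ℂ) ≠ 0 := by exact_mod_cast hdeg
  have hF0 : ∀ j, eval 0 (F j) = 0 := fun j => homog_eval_zero (H.hhom j) (H.he j)
  have hev : ∀ j, (d : ℂ) * eval 0 (g j) = eval 0 K := by
    intro j
    have := congrArg (eval 0) (hu j)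
    rw [map_mul, hF0 j, zero_mul, map_sub, map_mul, map_natCast] at this
    exact sub_eq_zero.1 this
  have hK0 : eval 0 K = 0 := by
    rw [← hev (Fin.last n), hlast]; simp
  refine ⟨fun j => ?_, ?_⟩
  · have := hev j
    rw [hK0] at this
    exact (mul_eq_zero.1 this).resolve_left hdC
  · have h4 := congrFun h2 2
    simp only [Pi.add_apply, Finset.sum_apply, Pi.smul_apply, smul_eq_mul, Pi.zero_apply] at h4
    have h5 : f * (∑ j, u j * pderiv 2 (F j) + (d : S) * h) = 0 := by
      rw [← h4, mul_add, Finset.mul_sum]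
      congr 1
      · refine Finset.sum_congr rfl fun j _ => ?_
        rw [hu j, hfP j]
        simp only [grad]; ring
      · simp; ring
    have h6 := congrArg (eval 0) ((mul_eq_zero.1 h5).resolve_left hf)
    rw [map_add, map_sum, map_mul, map_natCast, map_zero] at h6
    rw [Finset.sum_eq_zero (fun j _ => by rw [map_mul, hz j, mul_zero]), zero_add] at h6
    exact (mul_eq_zero.1 h6).resolve_left hdC

lemma G2_relation {n : ℕ} (hm : 4 ≤ n + 1) {F : Fin (n + 1) → S} {e : Fin (n + 1) → ℕ}
    (H : Good F e) (hz : ∀ j, eval 0 (pderiv 2 (F j)) = 0)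
    (s : (Fin n ⊕ Fin 1) → S) (hs : ∑ i, s i • G2 F i = 0) (i : Fin n ⊕ Fin 1) :
    eval 0 (s i) = 0 := by
  have h1 : ∑ j : Fin n, s (Sum.inl j) • rho F j.castSucc + s (Sum.inr 0) • sigz (∏ i, F i) = 0 := by
    rw [Fintype.sum_sum_type, Fin.sum_univ_one] at hs
    exact hs
  obtain ⟨h2, h3⟩ := relation hm H hz (Fin.snoc (α := fun _ => S) (fun j => s (Sum.inl j)) 0)
    (s (Sum.inr 0)) (by simp) (by
      rw [Fin.sum_univ_castSucc]
      simpa using h1)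
  rcases i with j | j
  · simpa using h2 j.castSucc
  · fin_cases j
    exact h3

lemma min_card {n : ℕ} {M : Submodule S (Fin 3 → S)} (G : (Fin n ⊕ Fin 1) → (Fin 3 → S))
    (hM : M = Submodule.span S (Set.range G))
    (hrel : ∀ s : (Fin n ⊕ Fin 1) → S, ∑ i, s i • G i = 0 → ∀ i, eval 0 (s i) = 0)
    (T : Finset (Fin 3 → S)) (hT : Submodule.span S (T : Set (Fin 3 → S)) = M) :
    n + 1 ≤ T.card := by
  have h1 : ∀ t : T, ∃ s : (Fin n ⊕ Fin 1) → S, ∑ i, s i • G i = t := by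
    intro t
    have : (t : Fin 3 → S) ∈ Submodule.span S (Set.range G) := by
      rw [← hM, ← hT]; exact Submodule.subset_span t.2
    exact (Submodule.mem_span_range_iff_exists_fun S).1 this
  choose s hs using h1
  have h2 : (⊤ : Submodule ℂ ((Fin n ⊕ Fin 1) → ℂ)) ≤
      Submodule.span ℂ (Set.range fun (t : T) i => eval 0 (s t i)) := by
    intro c _
    rw [Submodule.mem_span_range_iff_exists_fun]
    have h3 : ∑ i, (C (c i) : S) • G i ∈ Submodule.span S (Set.range ((↑) : T → (Fin 3 → S))) := by
      have : Set.range ((↑) : T → (Fin 3 → S)) = (T : Set (Fin 3 → S)) := by simp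
      rw [this, hT, hM]
      exact Submodule.sum_mem _ fun i _ => Submodule.smul_mem _ _ (Submodule.subset_span ⟨i, rfl⟩)
    obtain ⟨a, ha⟩ := (Submodule.mem_span_range_iff_exists_fun S).1 h3
    refine ⟨fun t => eval 0 (a t), ?_⟩
    have h4 := hrel (fun i => ∑ t, a t * s t i - C (c i)) (by
      simp only [sub_smul, Finset.sum_sub_distrib, ← ha, Finset.sum_smul]
      rw [Finset.sum_comm, sub_eq_zero]
      refine Finset.sum_congr rfl fun t _ => ?_
      rw [← hs t, Finset.smul_sum]
      refine Finset.sum_congr rfl fun i _ => ?_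
      rw [mul_smul])
    ext1 i
    have h5 := h4 i
    simp only [map_sub, map_sum, map_mul, eval_C] at h5
    simpa using sub_eq_zero.1 h5
  have h6 := finrank_range_le_card (R := ℂ) (fun (t : T) i => eval 0 (s t i))
  rw [Set.finrank, top_le_iff.1 h2, finrank_top, Module.finrank_fintype_fun_eq_card] at h6
  simpa using h6

lemma minimal_of_card {n : ℕ} {M : Submodule S (Fin 3 → S)} (G : (Fin n ⊕ Fin 1) → (Fin 3 → S))
    (hM : M = Submodule.span S (Set.range G))
    (hcard : ∀ T : Finset (Fin 3 → S),
      Submodule.span S (T : Set (Fin 3 → S)) = M → n + 1 ≤ T.card)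
    (i : Fin n ⊕ Fin 1) : G i ∉ Submodule.span S (G '' {i}ᶜ) := by
  classical
  intro hi
  have h1 := hcard ((Finset.univ.erase i).image G) (by
    have : (((Finset.univ.erase i).image G : Finset _) : Set (Fin 3 → S)) = G '' {i}ᶜ := by
      ext; simp
    rw [this, hM]
    apply le_antisymm
    · exact Submodule.span_mono (Set.image_subset_range _ _)
    · rw [Submodule.span_le]
      rintro _ ⟨j, rfl⟩
      by_cases hj : j = i
      · rw [hj]; exact hi
      · exact Submodule.subset_span ⟨j, hj, rfl⟩)
  have h2 := h1.trans Finset.card_image_le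
  rw [Finset.card_erase_of_mem (Finset.mem_univ i), Finset.card_univ, Fintype.card_sum] at h2
  simp at h2

lemma final {n : ℕ} (hm : 4 ≤ n + 1) {F : Fin (n + 1) → S} {e : Fin (n + 1) → ℕ} (H : Good F e)
    (hF1 : F ⟨0, by omega⟩ = X 0) (hF2 : F ⟨1, by omega⟩ = X 1)
    (hl2 : ∀ j : Fin (n + 1), 2 ≤ (j : ℕ) → 2 ≤ e j) :
    D0 (∏ i, F i) = Submodule.span S (Set.range (G2 F)) ∧
    (∀ i : Fin n ⊕ Fin 1, G2 F i ∉ Submodule.span S (G2 F '' {i}ᶜ)) ∧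
    (∀ T : Finset (Fin 3 → S),
      Submodule.span S (T : Set (Fin 3 → S)) = D0 (∏ i, F i) → n + 1 ≤ T.card) := by
  have hz : ∀ j, eval 0 (pderiv 2 (F j)) = 0 := by
    intro j
    rcases Nat.lt_or_ge (j : ℕ) 2 with h | h
    · have : j = ⟨0, by omega⟩ ∨ j = ⟨1, by omega⟩ := by
        rcases j with ⟨j, hj⟩
        simp only [Fin.mk.injEq]
        simp only at h
        omega
      rcases this with hj | hj
      · rw [hj, hF1]; simp [pderiv_X]
      · rw [hj, hF2]; simp [pderiv_X]
    · exact homog_eval_zero ((H.hhom j).pderiv) (by have := hl2 j h; omega)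
  have hM := D0_eq hm H hF1 hF2
  have hcard := min_card (G2 F) hM (fun s hs i => G2_relation hm H hz s hs i)
  exact ⟨hM, minimal_of_card (G2 F) hM hcard, hcard⟩

/-- if `ℓ(C) = 2` with `f_1 = x`, `f_2 = y` (so `e_1 = e_2 = 1` and `e_j ≥ 2`
for `j ≥ 3`), then `D₀(f)` is generated by `G = {ρ_1, …, ρ_{m−1}, σ^z}`, this generating
set is minimal, and every generating set of `D₀(f)` has at least `m` elements, so `C` is an
`m`-syzygy curve with exponents `d_1 = ⋯ = d_{m−1} = d−2`, `d_m = d−1`. -/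
theorem caseL2_minimal_generators
    (m : ℕ) (hm : 4 ≤ m) (F : Fin m → S) (e : Fin m → ℕ)
    (he : ∀ j, 1 ≤ e j)
    (hhom : ∀ j, (F j).IsHomogeneous (e j))
    (hsmooth : ∀ j, ∀ p : Fin 3 → ℂ,
      (∀ t, eval p (pderiv t (F j)) = 0) → p = 0)
    (hnc : ∀ i j : Fin m, i ≠ j → ∀ p : Fin 3 → ℂ, p ≠ 0 →
      eval p (F i) = 0 → eval p (F j) = 0 →
      LinearIndependent ℂ
        ![fun t => eval p (pderiv t (F i)), fun t => eval p (pderiv t (F j))])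
    (htriple : ∀ i j k : Fin m, i ≠ j → i ≠ k → j ≠ k → ∀ p : Fin 3 → ℂ, p ≠ 0 →
      ¬(eval p (F i) = 0 ∧ eval p (F j) = 0 ∧ eval p (F k) = 0))
    (hF1 : F ⟨0, by omega⟩ = X 0) (hF2 : F ⟨1, by omega⟩ = X 1)
    (he1 : e ⟨0, by omega⟩ = 1) (he2 : e ⟨1, by omega⟩ = 1)
    (hl2 : ∀ j : Fin m, 2 ≤ (j : ℕ) → 2 ≤ e j) :
    D0 (∏ i, F i) = Submodule.span S (Set.range (G2 F)) ∧
    (∀ i : Fin (m - 1) ⊕ Fin 1, G2 F i ∉ Submodule.span S (G2 F '' {i}ᶜ)) ∧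
    (∀ T : Finset (Fin 3 → S),
      Submodule.span S (T : Set (Fin 3 → S)) = D0 (∏ i, F i) → m ≤ T.card) := by
  obtain ⟨n, rfl⟩ : ∃ n, m = n + 1 := ⟨m - 1, by omega⟩
  exact final hm (good_of hm F e he hhom hsmooth hnc htriple) hF1 hF2 hl2
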